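/- arXiv:math/0702328 — 4 statements merged into one kernel-verified Lean document; each statement's English description precedes it below -/
import Mathlib

section
/- For any commutative integral domain R, the ideal I₁ of the polynomial ring R[A₊, A₋, B₊, B₋, x₊, x₋, y₊, y₋] generated by the two elements (x₊B₋ − x₋B₊) − (A₊B₋ − A₋B₊) and (A₊B₋ − A₋B₊) − (A₊y₋ − A₋y₊) is a prime ideal. In particular, taking R = ℤ, the ideal I₁ of Z[Λ] is prime. -/
/-!
Put `u = x - A` and `v = B - y`. The two generators become `u₊B₋ - u₋B₊` and `A₊v₋ - A₋v₊`,
two generic `2 × 2` determinants in disjoint sets of variables. So it suffices that for every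
domain `S` the ring `DetRing S = S[p, q, r][w] / (p w - q r)` is a domain: the quotient by `I₁` is
then `DetRing (DetRing R)`.

That `DetRing S` is a domain is a case of `prime_linear`: over a domain `D`, if `a` is prime and
does not divide `b`, then `a X - b` is a prime element of `D[X]`. Indeed `a X - b` divides `f` as
soon as `f (b / a) = 0` in `Frac D`: pseudo-division gives `a ^ n f = (a X - b) q`, and the prime `a`
does not divide `a X - b`, so `a ^ n` can be cancelled.
-/

open scoped Classical Matroid

/-- Index type for the eight variables of `ℤ[Λ]`:
`A s`, `B s`, `x s`, `y s` where `s : Bool` is the sign (`true` = `+`, `false` = `−`). -/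
inductive SVar : Type
  | A (s : Bool)
  | B (s : Bool)
  | x (s : Bool)
  | y (s : Bool)
  deriving DecidableEq

/-- The polynomial ring `ℤ[Λ] = ℤ[A₊, A₋, B₊, B₋, x₊, x₋, y₊, y₋]`. -/
abbrev ZLam : Type := MvPolynomial SVar ℤ

noncomputable def vA (s : Bool) : ZLam := MvPolynomial.X (SVar.A s)
noncomputable def vB (s : Bool) : ZLam := MvPolynomial.X (SVar.B s)
noncomputable def vx (s : Bool) : ZLam := MvPolynomial.X (SVar.x s)
noncomputable def vy (s : Bool) : ZLam := MvPolynomial.X (SVar.y s)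

/-- `(x₊B₋ − x₋B₊) − (A₊B₋ − A₋B₊)`, the first generator of `I₁`. -/
noncomputable def gen1 : ZLam :=
  (vx true * vB false - vx false * vB true) - (vA true * vB false - vA false * vB true)

/-- `(A₊B₋ − A₋B₊) − (A₊y₋ − A₋y₊)`, the second generator of `I₁`. -/
noncomputable def gen2 : ZLam :=
  (vA true * vB false - vA false * vB true) - (vA true * vy false - vA false * vy true)

/-- The ideal `I₁ ⊆ ℤ[Λ]`. -/
noncomputable def I1 : Ideal ZLam := Ideal.span {gen1, gen2}

open Polynomial in
/-- Pseudo-division by the linear polynomial `a X - b`. -/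
lemma exists_pseudo_division {D : Type*} [CommRing D] (a b : D) (f : D[X]) :
    ∃ (n : ℕ) (q : D[X]) (r : D), C (a ^ n) * f = (C a * X - C b) * q + C r := by
  induction f using Polynomial.induction_on' with
  | add f g hf hg =>
    obtain ⟨n, q, r, h⟩ := hf
    obtain ⟨m, q', r', h'⟩ := hg
    refine ⟨n + m, C (a ^ m) * q + C (a ^ n) * q', a ^ m * r + a ^ n * r', ?_⟩
    simp only [map_add, map_mul, pow_add] at *
    linear_combination C (a ^ m) * h + C (a ^ n) * h'
  | monomial n c =>
    -- `a X - b` divides `(a X) ^ n - b ^ n`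
    obtain ⟨q, hq⟩ := sub_dvd_pow_sub_pow (C a * X) (C b) n
    refine ⟨n, C c * q, c * b ^ n, ?_⟩
    rw [← C_mul_X_pow_eq_monomial]
    simp only [map_mul, map_pow, mul_pow] at *
    linear_combination C c * hq

open Polynomial in
lemma prime_linear {D : Type*} [CommRing D] [IsDomain D] {a b : D} (ha : Prime a)
    (hab : ¬ a ∣ b) : Prime (C a * X - C b : D[X]) := by
  have ha0 : algebraMap D (FractionRing D) a ≠ 0 := by
    simpa using ha.ne_zero
  have hCa : Prime (C a : D[X]) := prime_C_iff.2 ha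
  have hndvd : ¬ (C a : D[X]) ∣ C a * X - C b := by
    intro h
    rw [C_dvd_iff_dvd_coeff] at h
    simpa using hab (by simpa using h 0)
  set ev : D[X] →+* FractionRing D :=
    eval₂RingHom (algebraMap D (FractionRing D))
      (algebraMap D (FractionRing D) b / algebraMap D (FractionRing D) a) with hev
  have hev0 : ev (C a * X - C b) = 0 := by
    simp [hev, mul_div_cancel₀ _ ha0]
  have hker : ∀ f, ev f = 0 ↔ C a * X - C b ∣ f := by
    refine fun f ↦ ⟨fun hf ↦ ?_, ?_⟩
    · obtain ⟨n, q, r, h⟩ := exists_pseudo_division a b f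
      have hr : r = 0 := by
        have := congrArg ev h
        rw [map_mul, hf, map_add, map_mul, hev0] at this
        simpa [hev] using this.symm
      rw [hr, C_0, add_zero, C_pow] at h
      obtain ⟨t, rfl⟩ := hCa.pow_dvd_of_dvd_mul_left n hndvd (Dvd.intro _ h)
      refine ⟨t, mul_left_cancel₀ (pow_ne_zero n hCa.ne_zero) ?_⟩
      linear_combination h
    · rintro ⟨g, rfl⟩
      rw [map_mul, hev0, zero_mul]
  refine ⟨fun h ↦ hndvd (h ▸ dvd_zero _), fun h ↦ ?_, fun f g h ↦ ?_⟩
  · exact one_ne_zero ((map_one ev).symm.trans ((hker 1).2 h.dvd))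
  · simpa only [← hker, map_mul, mul_eq_zero] using h

/-- The coordinate ring `S[p, q, r][w] / (p w - q r)` of the generic `2 × 2` determinant, with
`p, q, r` encoded as `X 0, X 1, X 2` and `w` as the adjoined root. -/
abbrev DetRing (S : Type) [CommRing S] : Type :=
  AdjoinRoot (Polynomial.C (MvPolynomial.X 0) * Polynomial.X
    - Polynomial.C (MvPolynomial.X 1 * MvPolynomial.X 2) : Polynomial (MvPolynomial (Fin 3) S))

namespace DetRing

variable {S : Type} [CommRing S]

lemma isDomain [IsDomain S] : IsDomain (DetRing S) := by
  refine AdjoinRoot.isDomain_of_prime (prime_linear (MvPolynomial.X_prime) fun h ↦ ?_)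
  rcases (MvPolynomial.X_prime).dvd_or_dvd h with h | h <;>
    simp [MvPolynomial.X_dvd_X] at h

/-- The structure map `S → DetRing S`. -/
noncomputable def base : S →+* DetRing S :=
  (AdjoinRoot.of _).comp MvPolynomial.C

/-- The classes of `p, q, r` in `DetRing S`. -/
noncomputable def gen (i : Fin 3) : DetRing S := AdjoinRoot.of _ (MvPolynomial.X i)

/-- The class of `w` in `DetRing S`. -/
noncomputable def w : DetRing S := AdjoinRoot.root _

lemma relation : (gen 0 * w : DetRing S) = gen 1 * gen 2 := by
  have h := AdjoinRoot.eval₂_root (Polynomial.C (MvPolynomial.X 0) * Polynomial.X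
    - Polynomial.C (MvPolynomial.X 1 * MvPolynomial.X 2) : Polynomial (MvPolynomial (Fin 3) S))
  simpa [sub_eq_zero, gen, w] using h

/-- The universal property of `DetRing S`. -/
lemma exists_lift {T : Type} [CommRing T] (f : S →+* T) (g : Fin 3 → T) (t : T)
    (h : g 0 * t = g 1 * g 2) :
    ∃ F : DetRing S →+* T, (∀ s, F (base s) = f s) ∧ (∀ i, F (gen i) = g i) ∧ F w = t := by
  refine ⟨AdjoinRoot.lift (MvPolynomial.eval₂Hom f g) t (by simp [h]), ?_, ?_, ?_⟩ <;>
    simp [base, gen, w]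

end DetRing

open MvPolynomial SVar in
lemma span_isPrime (R : Type) [CommRing R] [IsDomain R] :
    (Ideal.span
      {((X (x true) * X (B false) - X (x false) * X (B true))
          - (X (A true) * X (B false) - X (A false) * X (B true)) : MvPolynomial SVar R),
        (X (A true) * X (B false) - X (A false) * X (B true))
          - (X (A true) * X (y false) - X (A false) * X (y true))}).IsPrime := by
  set I := Ideal.span
      {((X (x true) * X (B false) - X (x false) * X (B true))
          - (X (A true) * X (B false) - X (A false) * X (B true)) : MvPolynomial SVar R),
        (X (A true) * X (B false) - X (A false) * X (B true))
          - (X (A true) * X (y false) - X (A false) * X (y true))} with hI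
  have : IsDomain (DetRing R) := DetRing.isDomain
  have : IsDomain (DetRing (DetRing R)) := DetRing.isDomain
  -- The inner copy of `DetRing` has `(p, q, r, w) = (B₋, u₋, B₊, u₊)`, the outer one
  -- `(p, q, r, w) = (A₊, A₋, v₊, v₋)`, where `x = u + A` and `y = B - v`.
  let a : Bool → DetRing (DetRing R) := fun s ↦ DetRing.gen (if s then 0 else 1)
  let b : Bool → DetRing (DetRing R) := fun s ↦ DetRing.base (DetRing.gen (if s then 2 else 0))
  let u : Bool → DetRing (DetRing R) := fun s ↦
    DetRing.base (if s then DetRing.w else DetRing.gen 1)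
  let v : Bool → DetRing (DetRing R) := fun s ↦ if s then DetRing.gen 2 else DetRing.w
  have hub : b false * u true = u false * b true := by
    simpa [b, u] using congrArg DetRing.base (DetRing.relation (S := R))
  have hav : a true * v false = a false * v true := by
    simpa [a, v] using DetRing.relation (S := DetRing R)
  let φ : MvPolynomial SVar R →+* DetRing (DetRing R) :=
    eval₂Hom (DetRing.base.comp DetRing.base) fun
      | A s => a s
      | B s => b s
      | x s => u s + a s
      | y s => b s - v s
  let m := Ideal.Quotient.mk I
  have h1 : m _ = 0 := Ideal.Quotient.eq_zero_iff_mem.2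
    (Ideal.subset_span (Set.mem_insert _ _))
  have h2 : m _ = 0 := Ideal.Quotient.eq_zero_iff_mem.2
    (Ideal.subset_span (Set.mem_insert_of_mem _ rfl))
  simp only [map_sub, map_mul] at h1 h2
  -- `G` is built so that `G ∘ φ` is the quotient map by `I`, hence `ker φ ≤ I`.
  obtain ⟨F, hFb, hFg, hFw⟩ := DetRing.exists_lift (m.comp C)
    ![m (X (B false)), m (X (x false)) - m (X (A false)), m (X (B true))]
    (m (X (x true)) - m (X (A true))) (by simp; linear_combination h1)
  obtain ⟨G, hGb, hGg, hGw⟩ := DetRing.exists_lift F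
    ![m (X (A true)), m (X (A false)), m (X (B true)) - m (X (y true))]
    (m (X (B false)) - m (X (y false))) (by simp; linear_combination h2)
  have hGφ : G.comp φ = m := by
    apply MvPolynomial.ringHom_ext
    · intro r
      simp [φ, hGb, hFb]
    · rintro (_ | _ | _ | _) <;> rename_i s <;> cases s <;>
        simp [φ, a, b, u, v, hGb, hGg, hGw, hFg, hFw]
  have hker : I = RingHom.ker φ := by
    apply le_antisymm
    · rw [hI, Ideal.span_le]
      rintro _ (rfl | rfl) <;> rw [SetLike.mem_coe, RingHom.mem_ker] <;>
        simp only [φ, map_sub, map_mul, coe_eval₂Hom, eval₂_X]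
      · linear_combination hub
      · linear_combination hav
    · intro f hf
      rw [← Ideal.Quotient.eq_zero_iff_mem]
      change m f = 0
      rw [← hGφ, RingHom.comp_apply, RingHom.mem_ker.1 hf, map_zero]
  rw [hker]
  exact RingHom.ker_isPrime φ

/-- The ideal `I₁` (over any integral domain `R`, and in particular over `ℤ`) is prime. -/
theorem I1_isPrime (R : Type) [CommRing R] [IsDomain R] :
    (Ideal.span
      {((MvPolynomial.X (SVar.x true) * MvPolynomial.X (SVar.B false)
            - MvPolynomial.X (SVar.x false) * MvPolynomial.X (SVar.B true))
          - (MvPolynomial.X (SVar.A true) * MvPolynomial.X (SVar.B false)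
            - MvPolynomial.X (SVar.A false) * MvPolynomial.X (SVar.B true))
          : MvPolynomial SVar R),
        (MvPolynomial.X (SVar.A true) * MvPolynomial.X (SVar.B false)
            - MvPolynomial.X (SVar.A false) * MvPolynomial.X (SVar.B true))
          - (MvPolynomial.X (SVar.A true) * MvPolynomial.X (SVar.y false)
            - MvPolynomial.X (SVar.A false) * MvPolynomial.X (SVar.y true))}).IsPrime ∧
    I1.IsPrime := by
  exact ⟨span_isPrime R, span_isPrime ℤ⟩
end

section
/- Let R be a commutative integral domain and let R[a, b, c, d, p, q, u, v] be the polynomial ring in eight indeterminates over R. Then the ideal generated by the two elements a·d − b·c and p·v − q·u is a prime ideal; equivalently, the quotient ring R[a, b, c, d, p, q, u, v]/(ad − bc, pv − qu) is an integral domain. -/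
/-!
The ideal `I = (ad − bc, pv − qu)` is the kernel of the doubled Segre map `segre`, which sends
`a, b, c, d` to the products `x₁y₁, x₁y₂, x₂y₁, x₂y₂`, and `p, q, u, v` likewise in four further
variables. The target is a polynomial ring over a domain, so `I` is prime.

That `I` is contained in the kernel is immediate. Conversely, `segre` carries monomials to monomials
(`segre_monomial`), and two monomials with the same image are congruent modulo `I`
(`mk_monomial_eq`): for each matrix the row and column sums of the exponents agree, so the exponents
differ by `±t(1, -1, -1, 1)`, and the congruence follows from `(ad)ᵗ ≡ (bc)ᵗ`. Choosing a preimage of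
every monomial in the image thus gives a linear map `ψ` with `ψ ∘ segre` the quotient map modulo
`I`, whence `ker segre ⊆ I`.
-/

open scoped Classical Matroid


/-- Index type for the eight variables `a, b, c, d, p, q, u, v`. -/
inductive GVar : Type
  | a | b | c | d | p | q | u | v
  deriving DecidableEq

instance : Fintype GVar where
  elems := {.a, .b, .c, .d, .p, .q, .u, .v}
  complete x := by cases x <;> simp

lemma GVar.prod_univ {M : Type*} [CommMonoid M] (f : GVar → M) :
    ∏ i, f i = f .a * f .b * f .c * f .d * (f .p * f .q * f .u * f .v) := by
  change ∏ i ∈ ({.a, .b, .c, .d, .p, .q, .u, .v} : Finset GVar), f i = _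
  simp [mul_assoc]

lemma GVar.sum_univ {M : Type*} [AddCommMonoid M] (f : GVar → M) :
    ∑ i, f i = f .a + f .b + f .c + f .d + (f .p + f .q + f .u + f .v) := by
  change ∑ i ∈ ({.a, .b, .c, .d, .p, .q, .u, .v} : Finset GVar), f i = _
  simp [add_assoc]

/-- The exponent vector of the image of a variable under the Segre map. The target polynomial ring
reuses the index type `GVar`: `a, b` stand for the row variables `x₁, x₂` and `c, d` for the column
variables `y₁, y₂` of the first matrix, and `p, q`, `u, v` play the same roles for the second. -/
noncomputable def segreExp : GVar → (GVar →₀ ℕ)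
  | .a => Finsupp.single .a 1 + Finsupp.single .c 1
  | .b => Finsupp.single .a 1 + Finsupp.single .d 1
  | .c => Finsupp.single .b 1 + Finsupp.single .c 1
  | .d => Finsupp.single .b 1 + Finsupp.single .d 1
  | .p => Finsupp.single .p 1 + Finsupp.single .u 1
  | .q => Finsupp.single .p 1 + Finsupp.single .v 1
  | .u => Finsupp.single .q 1 + Finsupp.single .u 1
  | .v => Finsupp.single .q 1 + Finsupp.single .v 1

/-- The effect of the Segre map on exponent vectors: it records the row and column sums of the two
`2 × 2` matrices of exponents. -/
noncomputable def segreExpSum (m : GVar →₀ ℕ) : GVar →₀ ℕ := ∑ i, m i • segreExp i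

/-- The doubled Segre map, sending each matrix entry to the product of its row and column
variables. -/
noncomputable def segre (R : Type) [CommRing R] : MvPolynomial GVar R →ₐ[R] MvPolynomial GVar R :=
  MvPolynomial.aeval fun i => MvPolynomial.monomial (segreExp i) 1

lemma segre_monomial (R : Type) [CommRing R] (m : GVar →₀ ℕ) :
    segre R (MvPolynomial.monomial m 1) = MvPolynomial.monomial (segreExpSum m) 1 := by
  rw [segre, MvPolynomial.aeval_monomial, Finsupp.prod_fintype _ _ (by simp), segreExpSum,
    MvPolynomial.monomial_sum_one]
  simp [MvPolynomial.monomial_pow]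

lemma pow_mul_eq_of_le {A : Type*} [CommRing A] {a b c d : A} (h : a * d = b * c)
    {i j k l i' j' k' l' : ℕ} (h₁ : i + j = i' + j') (h₂ : k + l = k' + l')
    (h₃ : i + k = i' + k') (hle : i ≤ i') :
    a ^ i * b ^ j * c ^ k * d ^ l = a ^ i' * b ^ j' * c ^ k' * d ^ l' := by
  obtain ⟨t, rfl⟩ := Nat.exists_eq_add_of_le hle
  obtain rfl : j = j' + t := by omega
  obtain rfl : k = k' + t := by omega
  obtain rfl : l' = l + t := by omega
  calc a ^ i * b ^ (j' + t) * c ^ (k' + t) * d ^ l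
      = a ^ i * b ^ j' * c ^ k' * d ^ l * (b * c) ^ t := by ring
    _ = a ^ i * b ^ j' * c ^ k' * d ^ l * (a * d) ^ t := by rw [h]
    _ = a ^ (i + t) * b ^ j' * c ^ k' * d ^ (l + t) := by ring

/-- If `ad = bc`, a monomial in `a, b, c, d` depends only on the row and column sums of its
exponents. -/
lemma pow_mul_eq {A : Type*} [CommRing A] {a b c d : A} (h : a * d = b * c)
    {i j k l i' j' k' l' : ℕ} (h₁ : i + j = i' + j') (h₂ : k + l = k' + l')
    (h₃ : i + k = i' + k') :
    a ^ i * b ^ j * c ^ k * d ^ l = a ^ i' * b ^ j' * c ^ k' * d ^ l' := by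
  rcases le_total i i' with hle | hle
  · exact pow_mul_eq_of_le h h₁ h₂ h₃ hle
  · exact (pow_mul_eq_of_le h h₁.symm h₂.symm h₃.symm hle).symm

open MvPolynomial in
/-- Monomials with the same image under the Segre map are congruent modulo any ideal containing
both determinants. -/
lemma mk_monomial_eq {R : Type} [CommRing R] {I : Ideal (MvPolynomial GVar R)}
    (h₁ : X GVar.a * X GVar.d - X GVar.b * X GVar.c ∈ I)
    (h₂ : X GVar.p * X GVar.v - X GVar.q * X GVar.u ∈ I)
    {m n : GVar →₀ ℕ} (h : segreExpSum m = segreExpSum n) :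
    Ideal.Quotient.mk I (monomial m 1) = Ideal.Quotient.mk I (monomial n 1) := by
  have e₁ := Ideal.Quotient.eq.mpr h₁
  have e₂ := Ideal.Quotient.eq.mpr h₂
  rw [map_mul, map_mul] at e₁ e₂
  have key : ∀ x, segreExpSum m x = segreExpSum n x := fun x => by rw [h]
  have ha := key .a
  have hb := key .b
  have hc := key .c
  have hp := key .p
  have hq := key .q
  have hu := key .u
  simp [segreExpSum, GVar.sum_univ, segreExp] at ha hb hc hp hq hu
  simp only [monomial_eq, Finsupp.prod_fintype _ _ (fun _ => pow_zero _), GVar.prod_univ, map_mul,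
    map_pow, map_one, one_mul]
  rw [pow_mul_eq e₁ ha hb hc, pow_mul_eq e₂ hp hq hu]

open MvPolynomial in
lemma ker_segre (R : Type) [CommRing R] :
    RingHom.ker (segre R) =
      Ideal.span {(X GVar.a * X GVar.d - X GVar.b * X GVar.c : MvPolynomial GVar R),
        X GVar.p * X GVar.v - X GVar.q * X GVar.u} := by
  set I := Ideal.span {(X GVar.a * X GVar.d - X GVar.b * X GVar.c : MvPolynomial GVar R),
        X GVar.p * X GVar.v - X GVar.q * X GVar.u} with hI
  apply le_antisymm
  · intro f hf
    -- Outside the image of `segreExpSum` the value of `invFun`, and hence of `ψ`, is irrelevant.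
    let ψ : MvPolynomial GVar R →ₗ[R] MvPolynomial GVar R ⧸ I :=
      (basisMonomials GVar R).constr R fun n =>
        Ideal.Quotient.mk I (monomial (Function.invFun segreExpSum n) 1)
    have hψ : ψ ∘ₗ (segre R).toLinearMap = (Ideal.Quotient.mkₐ R I).toLinearMap := by
      refine (basisMonomials GVar R).ext fun m => ?_
      have h₁ : ψ (monomial (segreExpSum m) 1) = Ideal.Quotient.mk I
          (monomial (Function.invFun segreExpSum (segreExpSum m)) 1) := by
        have h := (basisMonomials GVar R).constr_basis R
          (fun n => Ideal.Quotient.mk I (monomial (Function.invFun segreExpSum n) 1))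
          (segreExpSum m)
        rwa [coe_basisMonomials] at h
      simp only [coe_basisMonomials, LinearMap.comp_apply, AlgHom.toLinearMap_apply,
        segre_monomial, h₁, Ideal.Quotient.mkₐ_eq_mk]
      exact mk_monomial_eq (Ideal.subset_span (by simp)) (Ideal.subset_span (by simp))
        (Function.invFun_eq ⟨m, rfl⟩)
    have h := LinearMap.congr_fun hψ f
    have hf' : segre R f = 0 := hf
    simp only [LinearMap.comp_apply, AlgHom.toLinearMap_apply, hf', map_zero,
      Ideal.Quotient.mkₐ_eq_mk] at h
    exact Ideal.Quotient.eq_zero_iff_mem.mp h.symm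
  · rw [hI, Ideal.span_le]
    rintro f (rfl | rfl) <;>
    · simp only [SetLike.mem_coe, RingHom.mem_ker, segre, map_sub, map_mul, aeval_X,
        monomial_mul, segreExp, sub_eq_zero]
      congr 2
      abel

open MvPolynomial in
/-- The ideal of `R[a,b,c,d,p,q,u,v]` generated by the determinants `ad − bc` and
`pv − qu` of two generic 2×2 matrices in disjoint variables is prime; equivalently, the
quotient ring is an integral domain. -/
theorem span_two_generic_dets_isPrime (R : Type) [CommRing R] [IsDomain R] :
    (Ideal.span {(X GVar.a * X GVar.d - X GVar.b * X GVar.c : MvPolynomial GVar R),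
        X GVar.p * X GVar.v - X GVar.q * X GVar.u}).IsPrime ∧
      IsDomain (MvPolynomial GVar R ⧸
        Ideal.span {(X GVar.a * X GVar.d - X GVar.b * X GVar.c : MvPolynomial GVar R),
          X GVar.p * X GVar.v - X GVar.q * X GVar.u}) := by
  have h := ker_segre R
  have hp : (RingHom.ker (segre R)).IsPrime := RingHom.ker_isPrime _
  rw [h] at hp
  exact ⟨hp, (Ideal.Quotient.isDomain_iff_prime _).mpr hp⟩
end

section
/- In the quotient ring Z[Λ]/I₁ the following identity holds for every integer k ≥ 1 and all signs ε, ε₁, …, ε_k ∈ {+, −}: A_ε · ( ∏_{i=1}^k y_{ε_i} − ∏_{i=1}^k B_{ε_i} ) = (y_ε − B_ε) · Σ_{i=1}^k A_{ε_i} · ( ∏_{j=1}^{i−1} y_{ε_j} ) · ( ∏_{t=i+1}^k B_{ε_t} ), where empty products equal 1. -/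
/-!
Only the second generator of `I₁` matters: modulo it, `A_ε (y_δ - B_δ) = (y_ε - B_ε) A_δ` for all
signs `ε, δ` (`exchange_mod_I1`). The identity then follows by telescoping
`∏ y - ∏ B = ∑ᵢ (∏_{j<i} y_j) (y_i - B_i) (∏_{t>i} B_t)` and exchanging in each summand; the
lemma `telescope_of_exchange` does both at once, by induction on the number of factors, in an
arbitrary commutative ring.
-/

open scoped Classical Matroid

theorem telescope_of_exchange {R : Type*} [CommRing R] (a d : R) (A B y : ℕ → R)
    (h : ∀ i, a * (y i - B i) = d * A i) (k : ℕ) :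
    a * (∏ i ∈ Finset.range k, y i - ∏ i ∈ Finset.range k, B i) =
      d * ∑ i ∈ Finset.range k,
        A i * (∏ j ∈ Finset.range i, y j) * ∏ t ∈ Finset.Ico (i + 1) k, B t := by
  induction k with
  | zero => simp
  | succ k ih =>
    -- Adjoining the factor `k` multiplies each earlier summand by `B k`.
    have hsum : ∑ i ∈ Finset.range k,
        A i * (∏ j ∈ Finset.range i, y j) * ∏ t ∈ Finset.Ico (i + 1) (k + 1), B t =
        (∑ i ∈ Finset.range k,
          A i * (∏ j ∈ Finset.range i, y j) * ∏ t ∈ Finset.Ico (i + 1) k, B t) * B k := by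
      rw [Finset.sum_mul]
      refine Finset.sum_congr rfl fun i hi => ?_
      rw [Finset.prod_Ico_succ_top (Nat.succ_le_of_lt (Finset.mem_range.mp hi))]
      ring
    rw [Finset.sum_range_succ, hsum, Finset.prod_range_succ, Finset.prod_range_succ,
      Finset.Ico_self, Finset.prod_empty]
    linear_combination B k * ih + (∏ i ∈ Finset.range k, y i) * h k

theorem exchange_mod_I1 (ε δ : Bool) :
    Ideal.Quotient.mk I1 (vA ε) * (Ideal.Quotient.mk I1 (vy δ) - Ideal.Quotient.mk I1 (vB δ)) =
      (Ideal.Quotient.mk I1 (vy ε) - Ideal.Quotient.mk I1 (vB ε)) *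
        Ideal.Quotient.mk I1 (vA δ) := by
  have h : Ideal.Quotient.mk I1 gen2 = 0 :=
    Ideal.Quotient.eq_zero_iff_mem.mpr (Ideal.subset_span (by simp))
  simp only [gen2, map_sub, map_mul] at h
  cases ε <;> cases δ
  · ring
  · linear_combination h
  · linear_combination -h
  · ring

/-- The key identity in `ℤ[Λ]/I₁`:
`A_ε(∏ y_{ε_i} − ∏ B_{ε_i}) = (y_ε − B_ε)·Σ_i A_{ε_i}·(∏_{j<i} y_{ε_j})·(∏_{t>i} B_{ε_t})`. -/
theorem key_identity_mod_I1 (k : ℕ) (hk : 1 ≤ k) (ε : Bool) (εs : ℕ → Bool) :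
    Ideal.Quotient.mk I1
        (vA ε * (∏ i ∈ Finset.range k, vy (εs i) - ∏ i ∈ Finset.range k, vB (εs i))) =
      Ideal.Quotient.mk I1
        ((vy ε - vB ε) *
          ∑ i ∈ Finset.range k,
            vA (εs i) * (∏ j ∈ Finset.range i, vy (εs j)) *
              ∏ t ∈ Finset.Ico (i + 1) k, vB (εs t)) := by
  simp only [map_mul, map_sub, map_prod, map_sum]
  exact telescope_of_exchange _ _ (fun i => Ideal.Quotient.mk I1 (vA (εs i)))
    (fun i => Ideal.Quotient.mk I1 (vB (εs i))) (fun i => Ideal.Quotient.mk I1 (vy (εs i)))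
    (fun i => exchange_mod_I1 ε (εs i)) k
end

section
/- For each sign ε ∈ {+, −}, the element x_ε·y_ε − A_ε·y_ε − B_ε·x_ε of Z[Λ] does not belong to the ideal I₁; that is, its image in the quotient ring Z[Λ]/I₁ is nonzero. (Indeed, every element of I₁ is a ℤ-linear combination of monomials each of which involves both a positively-indexed and a negatively-indexed variable.) -/
open scoped Classical Matroid

/-- The point with `x_ε = y_ε = 1` and all other coordinates `0`. -/
def signPt (ε : Bool) : SVar → ℤ
  | .A _ => 0
  | .B _ => 0
  | .x s => if s = ε then 1 else 0
  | .y s => if s = ε then 1 else 0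

/-- For each sign `ε`, the element `x_ε y_ε − A_ε y_ε − B_ε x_ε` does not lie in `I₁`:
its image in `ℤ[Λ]/I₁` is nonzero. -/
theorem det_not_mem_I1 (ε : Bool) :
    vx ε * vy ε - vA ε * vy ε - vB ε * vx ε ∉ I1 := by
  intro h
  -- Each monomial of a generator has a factor among the `A` and `B` variables, which vanish here.
  have hle : I1 ≤ RingHom.ker (MvPolynomial.eval (signPt ε)) := by
    rw [I1, Ideal.span_le]
    rintro p (rfl | rfl) <;>
      simp [RingHom.mem_ker, gen1, gen2, vA, vB, vx, vy, signPt]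
  have h0 := RingHom.mem_ker.mp (hle h)
  simp [vA, vB, vx, vy, signPt] at h0
end
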